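/- arXiv:2410.00276 — 3 statements merged into one kernel-verified Lean document; each statement's English description precedes it below -/
import Mathlib

section
/- (Strong Snake Lemma for pointed sets.) Let a : A → B and p : B → C be pointed maps with a injective away from the basepoint (not necessarily injective), p surjective and injective away from the basepoint, and a(A) = p⁻¹(∗) (exactness at B). Let i' : A' → B' and b' : B' → C' be pointed maps with i' injective, b' injective away from the basepoint (not necessarily surjective), and i'(A') = b'⁻¹(∗) (exactness at B'). Let f : A → A', g : B → B', h : C → C' be pointed maps, each injective away from the basepoint, with g ∘ a = i' ∘ f and h ∘ p = b' ∘ g. Then: a restricts to a map ker f → ker g, p restricts to a map ker g → ker h, i' induces a map coker f → coker g (sending a' to i'(a') if i'(a') ∉ g(B), else to ∗), b' induces a map coker g → coker h (sending b'' to b'(b'') if b'(b'') ∉ h(C), else to ∗), and there exists a pointed map δ : ker h → coker f such that all six maps are injective away from the basepoint and the six-term sequence ker f → ker g → ker h →^δ coker f → coker g → coker h is exact at ker g, ker h, coker f and coker g. -/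
/-!
An element `z` of `ker h` starts a zigzag `z = p y`, `g y = i' x'`, and the connecting map sends
`z` to the class of `x'` in `coker f`. The lift `y` is unique unless `z` is the basepoint, and then
exactness at `B` gives `y = a x`, so that `x' = f x` has trivial class. Everything else is a chase
along such zigzags.
-/

namespace PointedSet

/-- Injectivity away from the basepoint `y₀` of the codomain. Basepoints are explicit arguments
throughout rather than part of a bundled pointed type. -/
def InjectiveAwayFrom {X Y : Type*} (y₀ : Y) (u : X → Y) : Prop :=
  ∀ x₁ x₂, u x₁ = u x₂ → u x₁ ≠ y₀ → x₁ = x₂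

/-- Exactness of `X → Y → Z` at `Y`, where `Z` has basepoint `z₀`; this is `Function.Exact` with
`z₀` in place of zero. -/
def ExactAt {X Y Z : Type*} (z₀ : Z) (u : X → Y) (v : Y → Z) : Prop :=
  ∀ y, v y = z₀ ↔ y ∈ Set.range u

/-- The kernel of `u`, where `y₀` is the basepoint of its codomain. -/
abbrev Ker {X Y : Type*} (u : X → Y) (y₀ : Y) : Type _ := {x : X // u x = y₀}

/-- The cokernel of `u`, where `y₀` is the basepoint of its codomain: everything outside the
image, together with `y₀`. It is the quotient collapsing the image only when `u` is pointed. -/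
abbrev Coker {X Y : Type*} (u : X → Y) (y₀ : Y) : Type _ := {y : Y // y = y₀ ∨ y ∉ Set.range u}

/-- The basepoint of the cokernel. -/
abbrev cokerBase {X Y : Type*} (u : X → Y) (y₀ : Y) : Coker u y₀ := ⟨y₀, Or.inl rfl⟩

open Classical in
/-- The projection onto the cokernel, sending the image of `u` to the basepoint. -/
noncomputable def toCoker {X Y : Type*} (u : X → Y) (y₀ : Y) (y : Y) : Coker u y₀ :=
  if hy : y ∈ Set.range u then cokerBase u y₀ else ⟨y, Or.inr hy⟩

/-- The map on kernels induced by a commutative square with horizontal maps `s` and `t`. -/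
def kerMap {X Y X' Y' : Type*} {u : X → X'} {v : Y → Y'} {x₀' : X'} {y₀' : Y'} {s : X → Y}
    {t : X' → Y'} (ht₀ : t x₀' = y₀') (hsq : ∀ x, v (s x) = t (u x)) : Ker u x₀' → Ker v y₀' :=
  fun x => ⟨s x.1, by rw [hsq, x.2, ht₀]⟩

/-- The map on cokernels induced by the lower horizontal map `t` of a square with vertical
maps `u` and `v`. -/
noncomputable def cokerMap {X Y X' Y' : Type*} (u : X → X') (v : Y → Y') (x₀' : X') (y₀' : Y')
    (t : X' → Y') : Coker u x₀' → Coker v y₀' :=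
  fun x => toCoker v y₀' (t x.1)

section Cokernel

variable {X Y : Type*} {u : X → Y} {y₀ : Y}

theorem injectiveAwayFrom_of_injective (hu : Function.Injective u) : InjectiveAwayFrom y₀ u :=
  fun _ _ heq _ => hu heq

theorem toCoker_of_mem_range {y : Y} (hy : y ∈ Set.range u) :
    toCoker u y₀ y = cokerBase u y₀ :=
  dif_pos hy

theorem toCoker_of_notMem_range {y : Y} (hy : y ∉ Set.range u) :
    toCoker u y₀ y = ⟨y, Or.inr hy⟩ :=
  dif_neg hy

theorem toCoker_basepoint : toCoker u y₀ y₀ = cokerBase u y₀ := by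
  by_cases hy₀ : y₀ ∈ Set.range u
  · exact toCoker_of_mem_range hy₀
  · exact toCoker_of_notMem_range hy₀

theorem toCoker_coe (y : Coker u y₀) : toCoker u y₀ y = y := by
  obtain ⟨y, rfl | hy⟩ := y
  · exact toCoker_basepoint
  · exact toCoker_of_notMem_range hy

theorem toCoker_eq_cokerBase_iff {y : Y} :
    toCoker u y₀ y = cokerBase u y₀ ↔ y = y₀ ∨ y ∈ Set.range u := by
  refine ⟨fun h => ?_, ?_⟩
  · by_contra! hy
    rw [toCoker_of_notMem_range hy.2] at h
    exact hy.1 (congrArg Subtype.val h)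
  · rintro (rfl | hy)
    · exact toCoker_basepoint
    · exact toCoker_of_mem_range hy

theorem injectiveAwayFrom_toCoker : InjectiveAwayFrom (cokerBase u y₀) (toCoker u y₀) := by
  intro y₁ y₂ heq hne
  have hy₁ : y₁ ∉ Set.range u := fun h => hne (toCoker_of_mem_range h)
  have hy₂ : y₂ ∉ Set.range u := fun h => hne (heq.trans (toCoker_of_mem_range h))
  rw [toCoker_of_notMem_range hy₁, toCoker_of_notMem_range hy₂] at heq
  exact congrArg Subtype.val heq

end Cokernel

section Square

variable {X Y X' Y' : Type*} {u : X → X'} {v : Y → Y'} {s : X → Y} {t : X' → Y'}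
  {x₀' : X'} {y₀ : Y} {y₀' : Y'}

theorem InjectiveAwayFrom.kerMap (hs : InjectiveAwayFrom y₀ s) (hv₀ : v y₀ = y₀')
    (ht₀ : t x₀' = y₀') (hsq : ∀ x, v (s x) = t (u x)) :
    InjectiveAwayFrom (⟨y₀, hv₀⟩ : Ker v y₀') (kerMap ht₀ hsq) := fun x₁ x₂ heq hne =>
  Subtype.ext (hs x₁ x₂ (congrArg Subtype.val heq) fun h => hne (Subtype.ext h))

theorem InjectiveAwayFrom.cokerMap (ht : InjectiveAwayFrom y₀' t) :
    InjectiveAwayFrom (cokerBase v y₀') (cokerMap u v x₀' y₀' t) := fun _ _ heq hne =>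
  Subtype.ext (ht _ _ (injectiveAwayFrom_toCoker _ _ heq hne)
    fun h => hne (toCoker_eq_cokerBase_iff.2 (Or.inl h)))

theorem cokerMap_toCoker (ht₀ : t x₀' = y₀') (hsq : ∀ x, v (s x) = t (u x)) (x' : X') :
    cokerMap u v x₀' y₀' t (toCoker u x₀' x') = toCoker v y₀' (t x') := by
  by_cases hx' : x' ∈ Set.range u
  · obtain ⟨x, rfl⟩ := hx'
    rw [toCoker_of_mem_range ⟨x, rfl⟩, toCoker_of_mem_range ⟨s x, hsq x⟩, cokerMap, ht₀,
      toCoker_basepoint]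
  · rw [toCoker_of_notMem_range hx', cokerMap]

end Square

section Ladder

variable {A B C A' B' C' : Type*} {b0 : B} {c0 : C} {a0' : A'} {b0' : B'} {c0' : C'}
  {a : A → B} {p : B → C} {i' : A' → B'} {b' : B' → C'} {f : A → A'} {g : B → B'} {h : C → C'}

theorem exactAt_kerMap (hex : ExactAt c0 a p) (hi'_inj : Function.Injective i')
    (hi0' : i' a0' = b0') (hb0' : b' b0' = c0') (hh0 : h c0 = c0')
    (hsq1 : ∀ x, g (a x) = i' (f x)) (hsq2 : ∀ y, h (p y) = b' (g y)) :
    ExactAt (⟨c0, hh0⟩ : Ker h c0') (kerMap hi0' hsq1) (kerMap hb0' hsq2) := by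
  rintro ⟨y, hy⟩
  constructor
  · intro hpy
    obtain ⟨x, rfl⟩ := (hex y).1 (congrArg Subtype.val hpy)
    have hfx : f x = a0' := hi'_inj (by rw [← hsq1, hy, hi0'])
    exact ⟨⟨x, hfx⟩, rfl⟩
  · rintro ⟨x, hx⟩
    exact Subtype.ext ((hex y).2 ⟨x, congrArg Subtype.val hx⟩)

theorem exactAt_cokerMap (hp_surj : Function.Surjective p) (hb'_inj : InjectiveAwayFrom c0' b')
    (hex' : ExactAt c0' i' b') (hi0' : i' a0' = b0') (hb0' : b' b0' = c0')
    (hsq1 : ∀ x, g (a x) = i' (f x)) (hsq2 : ∀ y, h (p y) = b' (g y)) :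
    ExactAt (cokerBase h c0') (cokerMap f g a0' b0' i') (cokerMap g h b0' c0' b') := by
  intro y'
  constructor
  · intro hy'
    have hb'y' : b' y' = c0' := by
      rcases toCoker_eq_cokerBase_iff.1 hy' with hbase | ⟨z, hz⟩
      · exact hbase
      obtain ⟨y, rfl⟩ := hp_surj z
      by_contra hne
      have hgy : y' = g y := hb'_inj _ _ (by rw [← hz, hsq2]) hne
      rcases y'.2 with hbase | hrange
      · exact hne (by rw [hbase, hb0'])
      · exact hrange ⟨y, hgy.symm⟩
    obtain ⟨x', hx'⟩ := (hex' y').1 hb'y'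
    exact ⟨toCoker f a0' x', by rw [cokerMap_toCoker hi0' hsq1, hx', toCoker_coe]⟩
  · rintro ⟨x', rfl⟩
    calc cokerMap g h b0' c0' b' (cokerMap f g a0' b0' i' x')
      _ = toCoker h c0' (b' (i' x')) := cokerMap_toCoker hb0' hsq2 _
      _ = cokerBase h c0' := by rw [(hex' _).2 ⟨x', rfl⟩, toCoker_basepoint]

/-- A connecting map of the snake lemma: it sends `z` to the class of `x'` for every zigzag
`z = p y`, `g y = i' x'`. -/
def IsConnectingMap (p : B → C) (g : B → B') (i' : A' → B') (δ : Ker h c0' → Coker f a0') : Prop :=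
  ∀ (z : Ker h c0') (y : B) (x' : A'), p y = z → g y = i' x' → δ z = toCoker f a0' x'

theorem exists_zigzag (hp_surj : Function.Surjective p) (hex' : ExactAt c0' i' b')
    (hsq2 : ∀ y, h (p y) = b' (g y)) (z : Ker h c0') : ∃ y x', p y = z ∧ g y = i' x' := by
  obtain ⟨y, hy⟩ := hp_surj z
  obtain ⟨x', hx'⟩ := (hex' (g y)).1 (by rw [← hsq2, hy, z.2])
  exact ⟨y, x', hy, hx'.symm⟩

theorem toCoker_eq_of_zigzag (hp_inj : InjectiveAwayFrom c0 p) (hex : ExactAt c0 a p)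
    (hi'_inj : Function.Injective i') (hsq1 : ∀ x, g (a x) = i' (f x)) {y₁ y₂ : B} {x₁' x₂' : A'}
    (hp : p y₁ = p y₂) (h₁ : g y₁ = i' x₁') (h₂ : g y₂ = i' x₂') :
    toCoker f a0' x₁' = toCoker f a0' x₂' := by
  have toCoker_of_lift_basepoint {y : B} {x' : A'} (hy : p y = c0) (hx' : g y = i' x') :
      toCoker f a0' x' = cokerBase f a0' := by
    obtain ⟨x, rfl⟩ := (hex y).1 hy
    exact toCoker_of_mem_range ⟨x, hi'_inj (by rw [← hsq1, hx'])⟩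
  by_cases hbase : p y₁ = c0
  · rw [toCoker_of_lift_basepoint hbase h₁, toCoker_of_lift_basepoint (hp ▸ hbase) h₂]
  · obtain rfl := hp_inj y₁ y₂ hp hbase
    rw [hi'_inj (h₁.symm.trans h₂)]

theorem exists_isConnectingMap (hp_surj : Function.Surjective p) (hp_inj : InjectiveAwayFrom c0 p)
    (hex : ExactAt c0 a p) (hi'_inj : Function.Injective i') (hex' : ExactAt c0' i' b')
    (hsq1 : ∀ x, g (a x) = i' (f x)) (hsq2 : ∀ y, h (p y) = b' (g y)) :
    ∃ δ : Ker h c0' → Coker f a0', IsConnectingMap p g i' δ := by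
  choose lift x' hlift hx' using exists_zigzag hp_surj hex' hsq2
  refine ⟨fun z => toCoker f a0' (x' z), fun z y x₁' hy hx₁' => ?_⟩
  exact toCoker_eq_of_zigzag hp_inj hex hi'_inj hsq1 ((hlift z).trans hy.symm) (hx' z) hx₁'

namespace IsConnectingMap

variable {δ : Ker h c0' → Coker f a0'}

theorem map_basepoint (hδ : IsConnectingMap p g i' δ) (hp0 : p b0 = c0) (hg0 : g b0 = b0')
    (hi0' : i' a0' = b0') (hh0 : h c0 = c0') : δ ⟨c0, hh0⟩ = cokerBase f a0' :=
  (hδ _ b0 a0' hp0 (hg0.trans hi0'.symm)).trans toCoker_basepoint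

theorem injectiveAwayFrom (hδ : IsConnectingMap p g i' δ) (hp_surj : Function.Surjective p)
    (hi'_inj : Function.Injective i') (hex' : ExactAt c0' i' b') (hg_inj : InjectiveAwayFrom b0' g)
    (hi0' : i' a0' = b0') (hsq2 : ∀ y, h (p y) = b' (g y)) :
    InjectiveAwayFrom (cokerBase f a0') δ := by
  intro z₁ z₂ heq hne
  obtain ⟨y₁, x₁', hy₁, hx₁'⟩ := exists_zigzag hp_surj hex' hsq2 z₁
  obtain ⟨y₂, x₂', hy₂, hx₂'⟩ := exists_zigzag hp_surj hex' hsq2 z₂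
  rw [hδ z₁ y₁ x₁' hy₁ hx₁'] at heq hne
  rw [hδ z₂ y₂ x₂' hy₂ hx₂'] at heq
  obtain rfl : x₁' = x₂' := injectiveAwayFrom_toCoker _ _ heq hne
  have hx₁'_ne : x₁' ≠ a0' := fun hbase => hne (toCoker_eq_cokerBase_iff.2 (Or.inl hbase))
  have hgy₁_ne : g y₁ ≠ b0' := by
    rw [hx₁', ← hi0']
    exact hi'_inj.ne hx₁'_ne
  obtain rfl : y₁ = y₂ := hg_inj _ _ (hx₁'.trans hx₂'.symm) hgy₁_ne
  exact Subtype.ext (hy₁.symm.trans hy₂)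

theorem exactAt_ker (hδ : IsConnectingMap p g i' δ) (hp_surj : Function.Surjective p)
    (hex : ExactAt c0 a p) (hex' : ExactAt c0' i' b') (hg_inj : InjectiveAwayFrom b0' g)
    (hp0 : p b0 = c0) (hi0' : i' a0' = b0') (hb0' : b' b0' = c0') (hg0 : g b0 = b0')
    (hsq1 : ∀ x, g (a x) = i' (f x)) (hsq2 : ∀ y, h (p y) = b' (g y)) :
    ExactAt (cokerBase f a0') (kerMap hb0' hsq2) δ := by
  intro z
  constructor
  · intro hz
    obtain ⟨y, x', hy, hx'⟩ := exists_zigzag hp_surj hex' hsq2 z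
    rw [hδ z y x' hy hx', toCoker_eq_cokerBase_iff] at hz
    by_cases hgy : g y = b0'
    · exact ⟨⟨y, hgy⟩, Subtype.ext hy⟩
    obtain ⟨x, rfl⟩ := hz.resolve_left fun hbase => hgy (by rw [hx', hbase, hi0'])
    have hy_eq : y = a x := hg_inj _ _ (by rw [hx', hsq1]) hgy
    have hz_base : p y = c0 := (hex y).2 ⟨x, hy_eq.symm⟩
    exact ⟨⟨b0, hg0⟩, Subtype.ext (hp0.trans (hz_base.symm.trans hy))⟩
  · rintro ⟨y, rfl⟩
    rw [hδ _ y a0' rfl (y.2.trans hi0'.symm), toCoker_basepoint]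

theorem exactAt_coker (hδ : IsConnectingMap p g i' δ) (hp_surj : Function.Surjective p)
    (hex' : ExactAt c0' i' b') (hi0' : i' a0' = b0') (hg0 : g b0 = b0')
    (hsq1 : ∀ x, g (a x) = i' (f x)) (hsq2 : ∀ y, h (p y) = b' (g y)) :
    ExactAt (cokerBase g b0') δ (cokerMap f g a0' b0' i') := by
  intro x'
  constructor
  · intro hx'
    obtain ⟨y, hy⟩ : i' x' ∈ Set.range g := by
      rcases toCoker_eq_cokerBase_iff.1 hx' with hbase | hrange
      · exact ⟨b0, hg0.trans hbase.symm⟩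
      · exact hrange
    have hpy : h (p y) = c0' := by rw [hsq2, hy, (hex' _).2 ⟨x', rfl⟩]
    exact ⟨⟨p y, hpy⟩, (hδ _ y x' rfl hy).trans (toCoker_coe x')⟩
  · rintro ⟨z, rfl⟩
    obtain ⟨y, x', hy, hx'⟩ := exists_zigzag hp_surj hex' hsq2 z
    rw [hδ z y x' hy hx', cokerMap_toCoker hi0' hsq1, toCoker_of_mem_range ⟨y, hx'⟩]

end IsConnectingMap

end Ladder

end PointedSet

open PointedSet in
theorem stmt5_general {A B C A' B' C' : Type*}
    {b0 : B} {c0 : C} {a0' : A'} {b0' : B'} {c0' : C'}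
    {a : A → B} {p : B → C} {i' : A' → B'} {b' : B' → C'}
    {f : A → A'} {g : B → B'} {h : C → C'}
    (hp0 : p b0 = c0) (hi0' : i' a0' = b0') (hb0' : b' b0' = c0')
    (hg0 : g b0 = b0') (hh0 : h c0 = c0')
    (ha_inj : InjectiveAwayFrom b0 a) (hp_surj : Function.Surjective p)
    (hp_inj : InjectiveAwayFrom c0 p) (hex : ExactAt c0 a p)
    (hi'_inj : Function.Injective i') (hb'_inj : InjectiveAwayFrom c0' b')
    (hex' : ExactAt c0' i' b') (hg_inj : InjectiveAwayFrom b0' g)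
    (hsq1 : ∀ x, g (a x) = i' (f x)) (hsq2 : ∀ y, h (p y) = b' (g y)) :
    ∃ δ : Ker h c0' → Coker f a0',
      δ ⟨c0, hh0⟩ = cokerBase f a0' ∧
      InjectiveAwayFrom ⟨b0, hg0⟩ (kerMap hi0' hsq1) ∧
      InjectiveAwayFrom ⟨c0, hh0⟩ (kerMap hb0' hsq2) ∧
      InjectiveAwayFrom (cokerBase f a0') δ ∧
      InjectiveAwayFrom (cokerBase g b0') (cokerMap f g a0' b0' i') ∧
      InjectiveAwayFrom (cokerBase h c0') (cokerMap g h b0' c0' b') ∧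
      ExactAt ⟨c0, hh0⟩ (kerMap hi0' hsq1) (kerMap hb0' hsq2) ∧
      ExactAt (cokerBase f a0') (kerMap hb0' hsq2) δ ∧
      ExactAt (cokerBase g b0') δ (cokerMap f g a0' b0' i') ∧
      ExactAt (cokerBase h c0') (cokerMap f g a0' b0' i') (cokerMap g h b0' c0' b') := by
  obtain ⟨δ, hδ⟩ := exists_isConnectingMap hp_surj hp_inj hex hi'_inj hex' hsq1 hsq2
  exact ⟨δ, hδ.map_basepoint hp0 hg0 hi0' hh0,
    ha_inj.kerMap hg0 hi0' hsq1,
    hp_inj.kerMap hh0 hb0' hsq2,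
    hδ.injectiveAwayFrom hp_surj hi'_inj hex' hg_inj hi0' hsq2,
    (injectiveAwayFrom_of_injective hi'_inj).cokerMap,
    hb'_inj.cokerMap,
    exactAt_kerMap hex hi'_inj hi0' hb0' hh0 hsq1 hsq2,
    hδ.exactAt_ker hp_surj hex hex' hg_inj hp0 hi0' hb0' hg0 hsq1 hsq2,
    hδ.exactAt_coker hp_surj hex' hi0' hg0 hsq1 hsq2,
    exactAt_cokerMap hp_surj hb'_inj hex' hi0' hb0' hsq1 hsq2⟩

open Classical in
/-- **Strong Snake Lemma for pointed sets.** Pointed sets are modeled as types with a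
chosen basepoint. Given pointed maps `a : A → B` (injective away from the basepoint) and
`p : B → C` (surjective, injective away from the basepoint) with `a(A) = p⁻¹(∗)`, pointed
maps `i' : A' → B'` (injective) and `b' : B' → C'` (injective away from the basepoint)
with `i'(A') = b'⁻¹(∗)`, and pointed maps `f, g, h` injective away from the basepoint
making both squares commute, there is a six-term sequence
`ker f → ker g → ker h → coker f → coker g → coker h` whose maps are all injective away
from the basepoint and which is exact at `ker g`, `ker h`, `coker f` and `coker g`. -/
theorem stmt5 {A B C A' B' C' : Type}
    (a0 : A) (b0 : B) (c0 : C) (a0' : A') (b0' : B') (c0' : C')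
    (a : A → B) (p : B → C) (i' : A' → B') (b' : B' → C')
    (f : A → A') (g : B → B') (h : C → C')
    (ha0 : a a0 = b0) (hp0 : p b0 = c0) (hi0' : i' a0' = b0') (hb0' : b' b0' = c0')
    (hf0 : f a0 = a0') (hg0 : g b0 = b0') (hh0 : h c0 = c0')
    (ha_inj : ∀ x y : A, a x = a y → a x ≠ b0 → x = y)
    (hp_surj : Function.Surjective p)
    (hp_inj : ∀ x y : B, p x = p y → p x ≠ c0 → x = y)
    (hex : ∀ b : B, p b = c0 ↔ b ∈ Set.range a)
    (hi'_inj : Function.Injective i')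
    (hb'_inj : ∀ x y : B', b' x = b' y → b' x ≠ c0' → x = y)
    (hex' : ∀ x : B', b' x = c0' ↔ x ∈ Set.range i')
    (hf_inj : ∀ x y : A, f x = f y → f x ≠ a0' → x = y)
    (hg_inj : ∀ x y : B, g x = g y → g x ≠ b0' → x = y)
    (hh_inj : ∀ x y : C, h x = h y → h x ≠ c0' → x = y)
    (hsq1 : ∀ x : A, g (a x) = i' (f x))
    (hsq2 : ∀ x : B, h (p x) = b' (g x)) :
    -- kernels and cokernels, as pointed sets
    let Kf : Type := {x : A // f x = a0'}
    let Kg : Type := {x : B // g x = b0'}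
    let Kh : Type := {x : C // h x = c0'}
    let Qf : Type := {x : A' // x = a0' ∨ x ∉ Set.range f}
    let Qg : Type := {x : B' // x = b0' ∨ x ∉ Set.range g}
    let Qh : Type := {x : C' // x = c0' ∨ x ∉ Set.range h}
    -- the restriction of a to kernels
    let α : Kf → Kg := fun x => ⟨a x.1, by rw [hsq1, x.2, hi0']⟩
    -- the restriction of p to kernels
    let β : Kg → Kh := fun x => ⟨p x.1, by rw [hsq2, x.2, hb0']⟩
    -- the map induced by i' on cokernels
    let γ : Qf → Qg := fun x =>
      if hx : i' x.1 ∈ Set.range g then ⟨b0', Or.inl rfl⟩ else ⟨i' x.1, Or.inr hx⟩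
    -- the map induced by b' on cokernels
    let ε : Qg → Qh := fun x =>
      if hx : b' x.1 ∈ Set.range h then ⟨c0', Or.inl rfl⟩ else ⟨b' x.1, Or.inr hx⟩
    ∃ δ : Kh → Qf,
      -- δ is pointed
      δ ⟨c0, hh0⟩ = ⟨a0', Or.inl rfl⟩ ∧
      -- all maps in the sequence are injective away from the basepoint
      (∀ x y : Kf, α x = α y → α x ≠ (⟨b0, hg0⟩ : Kg) → x = y) ∧
      (∀ x y : Kg, β x = β y → β x ≠ (⟨c0, hh0⟩ : Kh) → x = y) ∧
      (∀ x y : Kh, δ x = δ y → δ x ≠ (⟨a0', Or.inl rfl⟩ : Qf) → x = y) ∧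
      (∀ x y : Qf, γ x = γ y → γ x ≠ (⟨b0', Or.inl rfl⟩ : Qg) → x = y) ∧
      (∀ x y : Qg, ε x = ε y → ε x ≠ (⟨c0', Or.inl rfl⟩ : Qh) → x = y) ∧
      -- exactness at ker g, ker h, coker f, coker g
      (∀ t : Kg, β t = (⟨c0, hh0⟩ : Kh) ↔ t ∈ Set.range α) ∧
      (∀ t : Kh, δ t = (⟨a0', Or.inl rfl⟩ : Qf) ↔ t ∈ Set.range β) ∧
      (∀ t : Qf, γ t = (⟨b0', Or.inl rfl⟩ : Qg) ↔ t ∈ Set.range δ) ∧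
      (∀ t : Qg, ε t = (⟨c0', Or.inl rfl⟩ : Qh) ↔ t ∈ Set.range γ) := by
  exact stmt5_general hp0 hi0' hb0' hg0 hh0 ha_inj hp_surj hp_inj hex hi'_inj hb'_inj hex'
    hg_inj hsq1 hsq2
end

section
/- Let g : Y → Z be a chain map of chain complexes of pointed sets with each gₙ surjective and injective away from the basepoint. Define the kernel complex K by Kₙ = gₙ⁻¹(∗) with the restriction of the differentials of Y. Then K is a chain complex of pointed sets (the differentials of Y map Kₙ into Kₙ₋₁, are injective away from the basepoint, and consecutive differentials compose to the constant map at ∗), and g is a quasi-isomorphism if and only if K is exact. -/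
/-- The data of a (possible) chain complex of pointed sets: a ℤ-indexed family of types
`X n` with basepoints `pt n` and differentials `d n : X n → X (n-1)`. -/
structure PreCC where
  X : ℤ → Type
  pt : ∀ n, X n
  d : ∀ n, X n → X (n - 1)

/-- `C` is a chain complex of pointed sets: the differentials are pointed, injective away
from the basepoint, and consecutive differentials compose to the constant map at the
basepoint. -/
def PreCC.IsComplex (C : PreCC) : Prop :=
  (∀ n, C.d n (C.pt n) = C.pt (n - 1)) ∧
  (∀ n, ∀ a b : C.X n, C.d n a = C.d n b → C.d n a ≠ C.pt (n - 1) → a = b) ∧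
  (∀ n, ∀ x : C.X n, C.d (n - 1) (C.d n x) = C.pt (n - 1 - 1))

/-- Transport along an equality of indices. -/
def PreCC.castX (C : PreCC) {m n : ℤ} (h : m = n) : C.X m → C.X n :=
  fun x => h ▸ x

/-- Membership in the `n`-th homology `Hₙ(C) = {x ∈ Xₙ : x ≠ ∗, dₙ x = ∗, x ∉ dₙ₊₁(Xₙ₊₁)} ∪ {∗}`. -/
def Hmem (C : PreCC) (n : ℤ) (x : C.X n) : Prop :=
  x = C.pt n ∨ (x ≠ C.pt n ∧ C.d n x = C.pt (n - 1) ∧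
    ∀ z : C.X (n + 1), C.castX (show n + 1 - 1 = n by omega) (C.d (n + 1) z) ≠ x)

/-- The `n`-th homology of `C`, as a pointed set. -/
def HT (C : PreCC) (n : ℤ) : Type := {x : C.X n // Hmem C n x}

/-- The basepoint of the `n`-th homology. -/
def Hpt (C : PreCC) (n : ℤ) : HT C n := ⟨C.pt n, Or.inl rfl⟩

/-- A chain map `C → D`: a family of pointed maps, each injective away from the
basepoint, commuting with the differentials. -/
def IsChainMap (C D : PreCC) (f : ∀ n, C.X n → D.X n) : Prop :=
  (∀ n, f n (C.pt n) = D.pt n) ∧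
  (∀ n, ∀ a b : C.X n, f n a = f n b → f n a ≠ D.pt n → a = b) ∧
  (∀ n, ∀ x : C.X n, f (n - 1) (C.d n x) = D.d n (f n x))

open Classical in
/-- The induced map on homology: `x ↦ fₙ(x)` if `fₙ(x) ∈ Hₙ(D)`, and `∗` otherwise. -/
noncomputable def Hmap (C D : PreCC) (f : ∀ n, C.X n → D.X n) (n : ℤ) :
    HT C n → HT D n :=
  fun x => if h : Hmem D n (f n x.1) then ⟨f n x.1, h⟩ else Hpt D n

/-- A chain complex of pointed sets is exact if all its homology pointed sets are trivial. -/
def PreCC.Exact (C : PreCC) : Prop :=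
  ∀ n, ∀ x : C.X n, Hmem C n x → x = C.pt n

/-!
A cycle `x` of the kernel `K` can fail to be a boundary of `K` for two reasons. Either `x` is not
even a boundary of `Y`, and then it is a nontrivial element of `Hₙ(Y)` killed by `g`; or `x = d w`
with `g w ≠ ∗`, and then `g w` is an element of `Hₙ₊₁(Z)` that `g` does not hit, because its only
preimage `w` is not a cycle. The first failure is excluded exactly when the maps `Hₙ(g)` are
injective, the second exactly when they are surjective.
-/

namespace PreCC

variable {C : PreCC} {n : ℤ} {x : C.X n}

/-- The image of the differential. As an inductive family it applies in every degree `n`, without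
transporting along `n + 1 - 1 = n`. -/
inductive IsBoundary (C : PreCC) : ∀ {n : ℤ}, C.X n → Prop
  | d {m : ℤ} (z : C.X m) : IsBoundary C (C.d m z)

theorem isBoundary_iff_exists_castX {m : ℤ} (h : m - 1 = n) :
    C.IsBoundary x ↔ ∃ z : C.X m, C.castX h (C.d m z) = x := by
  constructor
  · rintro @⟨k, z⟩
    obtain rfl : m = k := by omega
    exact ⟨z, rfl⟩
  · rintro ⟨z, rfl⟩
    subst h
    exact .d z

theorem isBoundary_iff_exists_d_eq {x : C.X (n - 1)} :
    C.IsBoundary x ↔ ∃ z : C.X n, C.d n z = x :=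
  isBoundary_iff_exists_castX rfl

theorem hmem_iff_of_ne_pt (hx : x ≠ C.pt n) :
    Hmem C n x ↔ C.d n x = C.pt (n - 1) ∧ ¬ C.IsBoundary x := by
  rw [isBoundary_iff_exists_castX (show n + 1 - 1 = n by omega), not_exists]
  simp only [Hmem, hx, false_or, ne_eq, not_false_eq_true, true_and]

namespace IsComplex

theorem isBoundary_pt (hC : C.IsComplex) (n : ℤ) : C.IsBoundary (C.pt n) := by
  obtain ⟨m, rfl⟩ : ∃ m, n = m - 1 := ⟨n + 1, by omega⟩
  exact hC.1 m ▸ .d (C.pt m)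

theorem d_eq_pt_of_isBoundary (hC : C.IsComplex) (hx : C.IsBoundary x) :
    C.d n x = C.pt (n - 1) := by
  obtain ⟨z⟩ := hx
  exact hC.2.2 _ z

theorem d_eq_pt_of_hmem (hC : C.IsComplex) (hx : Hmem C n x) : C.d n x = C.pt (n - 1) := by
  rcases hx with rfl | ⟨-, hd, -⟩
  exacts [hC.1 n, hd]

theorem hmem_imp_eq_pt_iff (hC : C.IsComplex) :
    (Hmem C n x → x = C.pt n) ↔ (C.d n x = C.pt (n - 1) → C.IsBoundary x) := by
  by_cases hx : x = C.pt n
  · simp only [hx, hC.isBoundary_pt n, implies_true]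
  · simp only [hmem_iff_of_ne_pt hx, hx, imp_false, not_and, not_not]

theorem exact_iff (hC : C.IsComplex) :
    C.Exact ↔ ∀ (n : ℤ) (x : C.X n), C.d n x = C.pt (n - 1) → C.IsBoundary x :=
  forall₂_congr fun _ _ => hC.hmem_imp_eq_pt_iff

end IsComplex

end PreCC

namespace IsChainMap

variable {Y Z : PreCC} {g : ∀ n, Y.X n → Z.X n} {n : ℤ} {y : Y.X n}

theorem ne_pt_of_map_ne_pt (hg : IsChainMap Y Z g) (hy : g n y ≠ Z.pt n) : y ≠ Y.pt n := by
  rintro rfl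
  exact hy (hg.1 n)

theorem isBoundary_map (hg : IsChainMap Y Z g) (hy : Y.IsBoundary y) :
    Z.IsBoundary (g n y) := by
  obtain ⟨w⟩ := hy
  rw [hg.2.2]
  exact .d _

theorem isBoundary_of_isBoundary_map (hg : IsChainMap Y Z g)
    (hsurj : ∀ n, Function.Surjective (g n)) (hy : g n y ≠ Z.pt n)
    (hb : Z.IsBoundary (g n y)) : Y.IsBoundary y := by
  obtain ⟨m, rfl⟩ : ∃ m, n = m - 1 := ⟨n + 1, by omega⟩
  obtain ⟨z, hz⟩ := PreCC.isBoundary_iff_exists_d_eq.1 hb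
  obtain ⟨w, rfl⟩ := hsurj m z
  have hw : g (m - 1) y = g (m - 1) (Y.d m w) := by rw [hg.2.2, hz]
  rw [hg.2.1 _ _ _ hw hy]
  exact .d w

theorem hmem_map (hg : IsChainMap Y Z g) (hsurj : ∀ n, Function.Surjective (g n))
    (hy : Hmem Y n y) : Hmem Z n (g n y) := by
  by_cases hgy : g n y = Z.pt n
  · exact .inl hgy
  obtain ⟨hd, hb⟩ := (PreCC.hmem_iff_of_ne_pt (hg.ne_pt_of_map_ne_pt hgy)).1 hy
  refine (PreCC.hmem_iff_of_ne_pt hgy).2 ⟨?_, mt (hg.isBoundary_of_isBoundary_map hsurj hgy) hb⟩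
  rw [← hg.2.2, hd, hg.1]

theorem val_Hmap (hg : IsChainMap Y Z g) (hsurj : ∀ n, Function.Surjective (g n)) (y : HT Y n) :
    (Hmap Y Z g n y).1 = g n y.1 :=
  congrArg Subtype.val (dif_pos (hg.hmem_map hsurj y.2))

theorem injective_Hmap_iff (hg : IsChainMap Y Z g) (hsurj : ∀ n, Function.Surjective (g n)) :
    Function.Injective (Hmap Y Z g n) ↔
      ∀ y : Y.X n, g n y = Z.pt n → Hmem Y n y → y = Y.pt n := by
  constructor
  · intro hinj y hgy hy
    have hmap : Hmap Y Z g n ⟨y, hy⟩ = Hmap Y Z g n (Hpt Y n) := Subtype.ext <|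
      calc (Hmap Y Z g n ⟨y, hy⟩).1
        _ = g n y := hg.val_Hmap hsurj _
        _ = Z.pt n := hgy
        _ = g n (Y.pt n) := (hg.1 n).symm
        _ = (Hmap Y Z g n (Hpt Y n)).1 := (hg.val_Hmap hsurj (Hpt Y n)).symm
    exact congrArg Subtype.val (hinj hmap)
  · intro htriv a b hab
    have hgab : g n a.1 = g n b.1 := by rw [← hg.val_Hmap hsurj, hab, hg.val_Hmap hsurj]
    refine Subtype.ext ?_
    by_cases ha : g n a.1 = Z.pt n
    · rw [htriv a.1 ha a.2, htriv b.1 (hgab.symm.trans ha) b.2]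
    · exact hg.2.1 n a.1 b.1 hgab ha

theorem surjective_Hmap_iff (hg : IsChainMap Y Z g) (hY : Y.IsComplex)
    (hsurj : ∀ n, Function.Surjective (g n)) :
    Function.Surjective (Hmap Y Z g n) ↔
      ∀ y : Y.X n, g (n - 1) (Y.d n y) = Z.pt (n - 1) →
        g n y = Z.pt n ∨ Y.d n y = Y.pt (n - 1) := by
  constructor
  · intro hH y hgdy
    by_contra! ⟨hgy, hdy⟩
    have hb : ¬ Z.IsBoundary (g n y) := fun hb =>
      hdy (hY.d_eq_pt_of_isBoundary (hg.isBoundary_of_isBoundary_map hsurj hgy hb))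
    have hz : Hmem Z n (g n y) :=
      (PreCC.hmem_iff_of_ne_pt hgy).2 ⟨(hg.2.2 n y).symm.trans hgdy, hb⟩
    obtain ⟨u, hu⟩ := hH ⟨g n y, hz⟩
    have hgu : g n y = g n u.1 := by rw [← hg.val_Hmap hsurj, hu]
    have huy : y = u.1 := hg.2.1 n y u.1 hgu hgy
    exact hdy (huy ▸ hY.d_eq_pt_of_hmem u.2)
  · rintro hlift ⟨z, hz⟩
    suffices ∃ y, Hmem Y n y ∧ g n y = z by
      obtain ⟨y, hy, hgy⟩ := this
      exact ⟨⟨y, hy⟩, Subtype.ext ((hg.val_Hmap hsurj _).trans hgy)⟩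
    by_cases hzpt : z = Z.pt n
    · exact ⟨Y.pt n, .inl rfl, (hg.1 n).trans hzpt.symm⟩
    obtain ⟨hdz, hbz⟩ := (PreCC.hmem_iff_of_ne_pt hzpt).1 hz
    obtain ⟨y, rfl⟩ := hsurj n z
    have hdy : Y.d n y = Y.pt (n - 1) :=
      (hlift y ((hg.2.2 n y).trans hdz)).resolve_left hzpt
    have hy : Hmem Y n y := (PreCC.hmem_iff_of_ne_pt (hg.ne_pt_of_map_ne_pt hzpt)).2
      ⟨hdy, mt hg.isBoundary_map hbz⟩
    exact ⟨y, hy, rfl⟩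

/-- The kernel complex of a chain map: the fibres over the basepoints, with the restricted
differentials. -/
def kernel (hg : IsChainMap Y Z g) (hZ : Z.IsComplex) : PreCC where
  X n := {y : Y.X n // g n y = Z.pt n}
  pt n := ⟨Y.pt n, hg.1 n⟩
  d n y := ⟨Y.d n y.1, by rw [hg.2.2 n, y.2, hZ.1 n]⟩

theorem isComplex_kernel (hg : IsChainMap Y Z g) (hY : Y.IsComplex) (hZ : Z.IsComplex) :
    (hg.kernel hZ).IsComplex := by
  refine ⟨fun n => Subtype.ext (hY.1 n), fun n a b hab hne => Subtype.ext ?_,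
    fun n x => Subtype.ext (hY.2.2 n x.1)⟩
  exact hY.2.1 n a.1 b.1 (congrArg Subtype.val hab) fun h => hne (Subtype.ext h)

theorem isBoundary_of_isBoundary_kernel (hg : IsChainMap Y Z g) (hZ : Z.IsComplex)
    {x : (hg.kernel hZ).X n} (hx : (hg.kernel hZ).IsBoundary x) : Y.IsBoundary x.1 := by
  obtain ⟨w⟩ := hx
  exact .d w.1

theorem exact_kernel_iff (hg : IsChainMap Y Z g) (hY : Y.IsComplex) (hZ : Z.IsComplex) :
    (hg.kernel hZ).Exact ↔
      (∀ (n : ℤ) (y : Y.X n), g n y = Z.pt n → Y.d n y = Y.pt (n - 1) → Y.IsBoundary y) ∧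
      ∀ (n : ℤ) (y : Y.X n), g (n - 1) (Y.d n y) = Z.pt (n - 1) →
        g n y = Z.pt n ∨ Y.d n y = Y.pt (n - 1) := by
  have hK := hg.isComplex_kernel hY hZ
  rw [hK.exact_iff]
  constructor
  · refine fun hexact => ⟨fun n y hgy hdy => ?_, fun n y hgdy => ?_⟩
    · exact hg.isBoundary_of_isBoundary_kernel hZ (hexact n ⟨y, hgy⟩ (Subtype.ext hdy))
    · have hb := hexact (n - 1) ⟨Y.d n y, hgdy⟩ (Subtype.ext (hY.2.2 n y))
      obtain ⟨w, hw⟩ := PreCC.isBoundary_iff_exists_d_eq.1 hb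
      have hdw : Y.d n y = Y.d n w.1 := (congrArg Subtype.val hw).symm
      by_cases hdy : Y.d n y = Y.pt (n - 1)
      · exact .inr hdy
      · exact .inl (hY.2.1 n y w.1 hdw hdy ▸ w.2)
  · rintro ⟨hbdry, hlift⟩ n ⟨y, hgy⟩ hdy
    obtain @⟨m, w⟩ := hbdry n y hgy (congrArg Subtype.val hdy)
    rcases hlift m w hgy with hgw | hdw
    · exact PreCC.IsBoundary.d (C := hg.kernel hZ) ⟨w, hgw⟩
    · have hpt : (⟨Y.d m w, hgy⟩ : (hg.kernel hZ).X (m - 1)) = (hg.kernel hZ).pt (m - 1) :=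
        Subtype.ext hdw
      exact hpt ▸ hK.isBoundary_pt (m - 1)

theorem forall_bijective_Hmap_iff_exact_kernel (hg : IsChainMap Y Z g) (hY : Y.IsComplex)
    (hZ : Z.IsComplex) (hsurj : ∀ n, Function.Surjective (g n)) :
    (∀ n, Function.Bijective (Hmap Y Z g n)) ↔ (hg.kernel hZ).Exact := by
  simp only [Function.Bijective, hg.injective_Hmap_iff hsurj, hg.surjective_Hmap_iff hY hsurj,
    hY.hmem_imp_eq_pt_iff, forall_and, hg.exact_kernel_iff hY hZ]

end IsChainMap

/-- For a levelwise surjective (and injective away from the basepoint) chain map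
`g : Y → Z` of chain complexes of pointed sets, the kernel complex `K`, with
`Kₙ = gₙ⁻¹(∗)` and the restricted differentials of `Y`, is a chain complex of pointed
sets, and `g` is a quasi-isomorphism if and only if `K` is exact. -/
theorem stmt11 (Y Z : PreCC) (hY : Y.IsComplex) (hZ : Z.IsComplex)
    (g : ∀ n, Y.X n → Z.X n) (hg : IsChainMap Y Z g)
    (hgsurj : ∀ n, Function.Surjective (g n)) :
    let K : PreCC :=
      ⟨fun n => {y : Y.X n // g n y = Z.pt n},
       fun n => ⟨Y.pt n, hg.1 n⟩,
       fun n y => ⟨Y.d n y.1, by rw [hg.2.2 n, y.2, hZ.1 n]⟩⟩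
    K.IsComplex ∧ ((∀ n, Function.Bijective (Hmap Y Z g n)) ↔ K.Exact) :=
  ⟨hg.isComplex_kernel hY hZ, hg.forall_bijective_Hmap_iff_exact_kernel hY hZ hgsurj⟩
end

section
/- Let X be a chain complex of pointed sets. Let H(X) denote the chain complex whose n-th pointed set is Hₙ(X) and whose differentials are constant at the basepoint. Then the levelwise maps qₙ : Xₙ → Hₙ(X), given by qₙ(x) = x if x ∈ Hₙ(X) and qₙ(x) = ∗ otherwise, form a chain map q : X → H(X) with each qₙ surjective and injective away from the basepoint, and q is a quasi-isomorphism: for every n the induced map Hₙ(q) : Hₙ(X) → Hₙ(H(X)) is a pointed bijection. -/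
/-!
An element of `Hₙ(X)` that is a boundary must be the basepoint, so `q` kills boundaries and
commutes with the (constant) differentials of `H(X)`. Since those differentials are
constant, every element of `H(X)` is its own homology class; as `q` fixes `Hₙ(X)` pointwise, the
induced map `Hₙ(q)` is the canonical identification of `Hₙ(X)` with `Hₙ(H(X))`.
-/

namespace PreCC

variable {C D : PreCC} {n : ℤ}

theorem castX_pt {m : ℤ} (h : m = n) : C.castX h (C.pt m) = C.pt n := by
  subst h
  rfl

theorem castX_d_castX {m : ℤ} (h : m = n) (x : C.X n) :
    C.castX (congrArg (· - 1) h) (C.d m (C.castX h.symm x)) = C.d n x := by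
  subst h
  rfl

theorem d_eq_pt_of_hmem {x : C.X n} (h : Hmem C (n - 1) (C.d n x)) :
    C.d n x = C.pt (n - 1) := by
  rcases h with eq_pt | ⟨-, -, not_boundary⟩
  · exact eq_pt
  · exact absurd (castX_d_castX (sub_add_cancel n 1) x) (not_boundary _)

theorem hmem_of_d_eq_pt {x : C.X n} (hcycle : C.d n x = C.pt (n - 1))
    (hboundary : ∀ z, C.d (n + 1) z = C.pt (n + 1 - 1)) : Hmem C n x := by
  by_cases hx : x = C.pt n
  · exact Or.inl hx
  · refine Or.inr ⟨hx, hcycle, fun z hz => hx ?_⟩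
    rw [← hz, hboundary, castX_pt]

theorem hmap_val_of_hmem {f : ∀ n, C.X n → D.X n} {x : HT C n} (h : Hmem D n (f n x.1)) :
    (Hmap C D f n x).1 = f n x.1 :=
  congrArg Subtype.val (dif_pos h)

theorem hmap_hpt {f : ∀ n, C.X n → D.X n} (hf : f n (C.pt n) = D.pt n) :
    Hmap C D f n (Hpt C n) = Hpt D n :=
  Subtype.ext ((hmap_val_of_hmem (Or.inl hf)).trans hf)

theorem hmap_bijective_of_forall_hmem {f : ∀ n, C.X n → D.X n} (hD : ∀ y, Hmem D n y)
    (hf : Function.Bijective fun x : HT C n => f n x.1) :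
    Function.Bijective (Hmap C D f n) := by
  have val_bijective : Function.Bijective fun y : HT D n => y.1 :=
    ⟨Subtype.val_injective, fun y => ⟨⟨y, hD y⟩, rfl⟩⟩
  have val_comp_hmap : (fun y : HT D n => y.1) ∘ Hmap C D f n = fun x : HT C n => f n x.1 :=
    funext fun _ => hmap_val_of_hmem (hD _)
  exact (val_bijective.of_comp_iff' _).1 (val_comp_hmap ▸ hf)

/-- The homology complex `H(C)`: the pointed sets `Hₙ(C)`, with all differentials constant at the
basepoint. -/
def homologyComplex (C : PreCC) : PreCC :=
  ⟨fun n => HT C n, fun n => Hpt C n, fun n _ => Hpt C (n - 1)⟩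

theorem hmem_homologyComplex (y : C.homologyComplex.X n) : Hmem C.homologyComplex n y :=
  hmem_of_d_eq_pt rfl fun _ => rfl

open Classical in
/-- The projection `qₙ : Cₙ → Hₙ(C)`, which fixes the elements of `Hₙ(C)` and sends all others to
the basepoint. -/
noncomputable def toHomology (C : PreCC) (n : ℤ) : C.X n → HT C n :=
  fun x => if h : Hmem C n x then ⟨x, h⟩ else Hpt C n

theorem toHomology_of_hmem {x : C.X n} (h : Hmem C n x) : C.toHomology n x = ⟨x, h⟩ :=
  dif_pos h

theorem toHomology_of_not_hmem {x : C.X n} (h : ¬Hmem C n x) : C.toHomology n x = Hpt C n :=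
  dif_neg h

theorem toHomology_val (y : HT C n) : C.toHomology n y.1 = y :=
  toHomology_of_hmem y.2

theorem val_toHomology_of_ne_hpt {x : C.X n} (hx : C.toHomology n x ≠ Hpt C n) :
    (C.toHomology n x).1 = x := by
  have hmem : Hmem C n x := not_imp_comm.1 toHomology_of_not_hmem hx
  rw [toHomology_of_hmem hmem]

theorem eq_of_toHomology_eq {a b : C.X n} (hab : C.toHomology n a = C.toHomology n b)
    (ha : C.toHomology n a ≠ Hpt C n) : a = b :=
  calc
    a = (C.toHomology n a).1 := (val_toHomology_of_ne_hpt ha).symm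
    _ = (C.toHomology n b).1 := congrArg Subtype.val hab
    _ = b := val_toHomology_of_ne_hpt (hab ▸ ha)

theorem toHomology_d (x : C.X n) : C.toHomology (n - 1) (C.d n x) = Hpt C (n - 1) := by
  by_cases h : Hmem C (n - 1) (C.d n x)
  · rw [d_eq_pt_of_hmem h]
    exact toHomology_val (Hpt C (n - 1))
  · exact toHomology_of_not_hmem h

theorem isChainMap_toHomology (C : PreCC) : IsChainMap C C.homologyComplex C.toHomology :=
  ⟨fun n => toHomology_val (Hpt C n), fun _ _ _ => eq_of_toHomology_eq, fun _ => toHomology_d⟩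

theorem toHomology_surjective (C : PreCC) (n : ℤ) : Function.Surjective (C.toHomology n) :=
  fun y => ⟨y.1, toHomology_val y⟩

theorem hmap_toHomology_bijective (C : PreCC) (n : ℤ) :
    Function.Bijective (Hmap C C.homologyComplex C.toHomology n) := by
  have toHomology_comp_val : (fun x : HT C n => C.toHomology n x.1) = id := funext toHomology_val
  refine hmap_bijective_of_forall_hmem hmem_homologyComplex ?_
  exact toHomology_comp_val ▸ Function.bijective_id

end PreCC

theorem stmt14_general (C : PreCC) :
    IsChainMap C C.homologyComplex C.toHomology ∧
    (∀ n, Function.Surjective (C.toHomology n)) ∧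
    (∀ n : ℤ, Hmap C C.homologyComplex C.toHomology n (Hpt C n) = Hpt C.homologyComplex n ∧
      Function.Bijective (Hmap C C.homologyComplex C.toHomology n)) :=
  ⟨C.isChainMap_toHomology, C.toHomology_surjective,
    fun n => ⟨PreCC.hmap_hpt (C.isChainMap_toHomology.1 n), C.hmap_toHomology_bijective n⟩⟩

open Classical in
/-- For a chain complex of pointed sets `C`, the levelwise maps `qₙ : Cₙ → Hₙ(C)`
(`qₙ(x) = x` if `x ∈ Hₙ(C)` and `qₙ(x) = ∗` otherwise) into the homology complex `H(C)`
(whose `n`-th pointed set is `Hₙ(C)` and whose differentials are constant at the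
basepoint) form a chain map `q : C → H(C)` which is levelwise surjective and injective
away from the basepoint, and which is a quasi-isomorphism: each induced map
`Hₙ(q) : Hₙ(C) → Hₙ(H(C))` is a pointed bijection. -/
theorem stmt14 (C : PreCC) (hC : C.IsComplex) :
    let HC : PreCC := ⟨fun n => HT C n, fun n => Hpt C n, fun n _ => Hpt C (n - 1)⟩
    let q : ∀ n, C.X n → HC.X n := fun n x =>
      if h : Hmem C n x then ⟨x, h⟩ else Hpt C n
    IsChainMap C HC q ∧ (∀ n, Function.Surjective (q n)) ∧
    (∀ n : ℤ, Hmap C HC q n (Hpt C n) = Hpt HC n ∧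
      Function.Bijective (Hmap C HC q n)) :=
  stmt14_general C
end
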